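/- arXiv:1406.0701 — 2 statements merged into one kernel-verified Lean document; each statement's English description precedes it below -/
import Mathlib

section
/- Suppose (A_i)_{i ∈ I} is a family of pairwise disjoint Borel subsets of ℝ whose union is ℝ, and each A_i is closed under addition. Then every A_i either has Lebesgue measure zero and is meager, or is equal to one of the sets ℝ, (-∞, 0), (-∞, 0], (0, ∞), [0, ∞). -/
open MeasureTheory Set Filter Topology
open scoped Pointwise

/-- A **Steinhaus theorem** for sums: if `E ⊆ ℝ` is measurable of positive measure, then `E + E` has
nonempty interior. -/
theorem nonempty_interior_add_self_of_volume_ne_zero {E : Set ℝ} (hE : MeasurableSet E)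
    (hpos : volume E ≠ 0) : (interior (E + E)).Nonempty := by
  obtain ⟨t, ht⟩ : ∃ t : ℝ, volume (E ∩ (fun x ↦ t - x) ⁻¹' E) ≠ 0 := by
    by_contra! h
    have hmp := Measure.measurePreserving_swap.comp
      (measurePreserving_prod_add (volume : Measure ℝ) (volume : Measure ℝ))
    have hS : MeasurableSet {p : ℝ × ℝ | p.2 ∈ E ∧ p.1 - p.2 ∈ E} :=
      (measurable_snd hE).inter ((measurable_fst.sub measurable_snd) hE)
    have hnull : (volume.prod volume) {p : ℝ × ℝ | p.2 ∈ E ∧ p.1 - p.2 ∈ E} = 0 :=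
      (Measure.measure_prod_null hS).2 (ae_of_all _ h)
    have hprod := hmp.measure_preimage hS.nullMeasurableSet
    have hpre : (Prod.swap ∘ fun z : ℝ × ℝ ↦ (z.1, z.1 + z.2)) ⁻¹'
        {p : ℝ × ℝ | p.2 ∈ E ∧ p.1 - p.2 ∈ E} = E ×ˢ E := by
      ext ⟨x, y⟩
      simp
    rw [hpre, hnull, Measure.prod_prod, mul_self_eq_zero] at hprod
    exact hpos hprod
  have hmeas : MeasurableSet (E ∩ (fun x ↦ t - x) ⁻¹' E) :=
    hE.inter ((measurable_const.sub measurable_id) hE)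
  have hnhds := Measure.sub_mem_nhds_zero_of_addHaar_pos volume _ hmeas (pos_iff_ne_zero.2 ht)
  refine ⟨t, mem_interior_iff_mem_nhds.2 ?_⟩
  have htend : Tendsto (fun s : ℝ ↦ s - t) (𝓝 t) (𝓝 0) := by
    simpa using (continuous_id.sub continuous_const).tendsto (f := fun s : ℝ ↦ s - t) t
  filter_upwards [htend hnhds] with s hs
  obtain ⟨x, hx, y, hy, hxy⟩ := hs
  exact ⟨x, hx.1, t - y, hy.2, by simp only at hxy ⊢; linarith⟩

/-- A **Pettis theorem** for sums: if `E ⊆ ℝ` is Borel and not meagre, then `E + E` has nonempty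
interior. -/
theorem nonempty_interior_add_self_of_not_isMeagre {E : Set ℝ} (hE : MeasurableSet E)
    (hE' : ¬ IsMeagre E) : (interior (E + E)).Nonempty := by
  obtain ⟨U, hU, hEU⟩ := hE.residualEq_isOpen
  obtain ⟨u, hu⟩ : U.Nonempty := by
    rw [nonempty_iff_ne_empty]
    rintro rfl
    exact hE' (eventuallyEq_empty.1 hEU)
  refine ⟨u + u, mem_interior_iff_mem_nhds.2 ?_⟩
  have htend : Tendsto (fun s : ℝ ↦ s - u) (𝓝 (u + u)) (𝓝 u) := by
    simpa using (continuous_id.sub continuous_const).tendsto (f := fun s : ℝ ↦ s - u) (u + u)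
  filter_upwards [htend (hU.mem_nhds hu)] with s hs
  have hrefl : Tendsto (fun x : ℝ ↦ s - x) (residual ℝ) (residual ℝ) :=
    tendsto_residual_of_isOpenMap (Homeomorph.subLeft s).continuous (Homeomorph.subLeft s).isOpenMap
  have hres : ∀ᶠ x in residual ℝ, (x ∈ E ↔ x ∈ U) ∧ (s - x ∈ E ↔ s - x ∈ U) :=
    hEU.mem_iff.and (hrefl.eventually hEU.mem_iff)
  obtain ⟨x, hx, hxE⟩ := (dense_of_mem_residual hres).inter_open_nonempty
    (U ∩ (fun x ↦ s - x) ⁻¹' U) (hU.inter (hU.preimage (Homeomorph.subLeft s).continuous))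
    ⟨u, hu, hs⟩
  exact ⟨x, hxE.1.2 hx.1, s - x, hxE.2.2 hx.2, add_sub_cancel _ _⟩

theorem natCast_mul_mem_of_add_mem {S : Set ℝ} (hadd : ∀ x ∈ S, ∀ y ∈ S, x + y ∈ S) {x : ℝ}
    (hx : x ∈ S) {n : ℕ} (hn : 0 < n) : (n : ℝ) * x ∈ S := by
  induction n, hn using Nat.le_induction with
  | base => simpa using hx
  | succ n _ ih =>
    rw [Nat.cast_succ, add_one_mul]
    exact hadd _ ih _ hx

/-- In a partition of `ℝ` into sets closed under addition, a part contains every real having the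
same strict sign as one of its interior points. -/
theorem mem_of_mem_interior_of_mul_pos {ι : Type*} {A : ι → Set ℝ}
    (hdisj : Pairwise (Function.onFun Disjoint A)) (hcover : (⋃ i, A i) = univ)
    (hadd : ∀ i, ∀ x ∈ A i, ∀ y ∈ A i, x + y ∈ A i) {i : ι} {c x : ℝ}
    (hc : c ∈ interior (A i)) (hcx : 0 < c * x) : x ∈ A i := by
  have hx : x ≠ 0 := right_ne_zero_of_mul hcx.ne'
  have hdiv : 0 < c / x := by
    rw [← mul_div_mul_right c x hx]
    exact div_pos hcx (mul_self_pos.2 hx)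
  have hcont : Continuous fun q : ℝ ↦ q * x := continuous_id.mul continuous_const
  obtain ⟨-, ⟨hqA, hq⟩, q, rfl⟩ := Rat.denseRange_cast (𝕜 := ℝ).inter_open_nonempty
    ((fun q : ℝ ↦ q * x) ⁻¹' interior (A i) ∩ Ioi 0)
    ((isOpen_interior.preimage hcont).inter isOpen_Ioi)
    ⟨c / x, by simpa [div_mul_cancel₀ c hx] using hc, hdiv⟩
  have hqpos : 0 < q := by exact_mod_cast mem_Ioi.1 hq
  have hnum : ((q.num.toNat : ℕ) : ℝ) = (q.den : ℝ) * q := by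
    have h1 : ((q.num.toNat : ℕ) : ℤ) = q.num := Int.toNat_of_nonneg (Rat.num_pos.2 hqpos).le
    have h2 : (q.den : ℚ) * q = q.num := Rat.den_mul_eq_num q
    have h3 : ((q.num.toNat : ℕ) : ℚ) = (q.den : ℚ) * q := by
      rw [h2]
      exact_mod_cast h1
    exact_mod_cast h3
  obtain ⟨j, hj⟩ := mem_iUnion.1 (hcover ▸ mem_univ x)
  have hmemi : (q.den : ℝ) * (q * x) ∈ A i :=
    natCast_mul_mem_of_add_mem (hadd i) (interior_subset hqA) q.den_pos
  have hmemj : ((q.num.toNat : ℕ) : ℝ) * x ∈ A j :=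
    natCast_mul_mem_of_add_mem (hadd j) hj (by have := Rat.num_pos.2 hqpos; lia)
  rw [hnum, mul_assoc] at hmemj
  obtain rfl : i = j := by
    by_contra hij
    exact (disjoint_left.1 (hdisj hij)) hmemi hmemj
  exact hj

/-- A set of reals closed under addition and containing `(0, ∞)` is `ℝ`, `(0, ∞)` or `[0, ∞)`. -/
theorem eq_univ_or_Ioi_or_Ici_of_Ioi_subset {S : Set ℝ} (hadd : ∀ x ∈ S, ∀ y ∈ S, x + y ∈ S)
    (hS : Ioi 0 ⊆ S) : S = univ ∨ S = Ioi 0 ∨ S = Ici 0 := by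
  by_cases hneg : ∃ x ∈ S, x < 0
  · obtain ⟨x, hxS, hx⟩ := hneg
    refine .inl (eq_univ_of_forall fun y ↦ ?_)
    obtain ⟨n, hn⟩ := exists_nat_gt (y / x)
    have hlt : ((n + 1 : ℕ) : ℝ) * x < y := by
      rw [← div_lt_iff_of_neg hx]
      push_cast
      linarith
    have := hadd _ (natCast_mul_mem_of_add_mem hadd hxS n.succ_pos) _ (hS (sub_pos.2 hlt))
    rwa [add_sub_cancel] at this
  · push Not at hneg
    refine .inr ?_
    by_cases h0 : (0 : ℝ) ∈ S
    · refine .inr (Subset.antisymm hneg fun y hy ↦ ?_)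
      rcases eq_or_lt_of_le (mem_Ici.1 hy) with rfl | h
      exacts [h0, hS h]
    · exact .inl (Subset.antisymm
        (fun y hy ↦ lt_of_le_of_ne (hneg y hy) fun h ↦ h0 (h ▸ hy)) hS)

/-- If `ℝ` is partitioned into Borel sets `A i`, each closed under addition, then every `A i`
either is Lebesgue null and meager, or equals one of `ℝ`, `(-∞,0)`, `(-∞,0]`, `(0,∞)`, `[0,∞)`. -/
theorem stmt_5 {ι : Type*} (A : ι → Set ℝ)
    (hmeas : ∀ i, MeasurableSet (A i))
    (hdisj : Pairwise (Function.onFun Disjoint A))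
    (hcover : (⋃ i, A i) = Set.univ)
    (hadd : ∀ i, ∀ x ∈ A i, ∀ y ∈ A i, x + y ∈ A i) :
    ∀ i, (MeasureTheory.volume (A i) = 0 ∧ IsMeagre (A i)) ∨
      A i = Set.univ ∨ A i = Set.Iio (0 : ℝ) ∨ A i = Set.Iic (0 : ℝ) ∨
      A i = Set.Ioi (0 : ℝ) ∨ A i = Set.Ici (0 : ℝ) := by
  intro i
  by_cases hsmall : volume (A i) = 0 ∧ IsMeagre (A i)
  · exact .inl hsmall
  refine .inr ?_
  have hsub : A i + A i ⊆ A i := add_subset_iff.2 (hadd i)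
  have hint : (interior (A i)).Nonempty := by
    refine Nonempty.mono (interior_mono hsub) ?_
    by_cases h : volume (A i) = 0
    · exact nonempty_interior_add_self_of_not_isMeagre (hmeas i) fun h' ↦ hsmall ⟨h, h'⟩
    · exact nonempty_interior_add_self_of_volume_ne_zero (hmeas i) h
  obtain ⟨c, hc, hc0⟩ := (dense_compl_singleton (0 : ℝ)).inter_open_nonempty _ isOpen_interior hint
  rcases lt_or_gt_of_ne (show c ≠ 0 from hc0) with hneg | hpos
  · have hIoi : Ioi 0 ⊆ -A i := fun x hx ↦
      mem_of_mem_interior_of_mul_pos hdisj hcover hadd hc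
        (mul_pos_of_neg_of_neg hneg (neg_neg_of_pos hx))
    have hadd' : ∀ x ∈ -A i, ∀ y ∈ -A i, x + y ∈ -A i := fun x hx y hy ↦ by
      rw [Set.mem_neg, neg_add]
      exact hadd i _ hx _ hy
    have := eq_univ_or_Ioi_or_Ici_of_Ioi_subset hadd' hIoi
    simp only [neg_eq_iff_eq_neg, neg_univ, Set.neg_Ioi, Set.neg_Ici, neg_zero] at this
    tauto
  · have hIoi : Ioi 0 ⊆ A i := fun x hx ↦
      mem_of_mem_interior_of_mul_pos hdisj hcover hadd hc (mul_pos hpos hx)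
    have := eq_univ_or_Ioi_or_Ici_of_Ioi_subset (hadd i) hIoi
    tauto
end

section
/- Suppose (A_i)_{i ∈ I} is a family of pairwise disjoint nonempty Borel subsets of ℝ whose union is ℝ, and each A_i is closed under addition. Then the cardinality κ of I satisfies: κ ∈ {1, 2, 3}, or κ ≥ cov(𝒩) and κ ≥ cov(ℳ). -/
/-- `cov(𝒩)`: the least cardinality of a family of Lebesgue null subsets of `ℝ` covering `ℝ`. -/
noncomputable def covNull : Cardinal :=
  sInf { c : Cardinal | ∃ S : Set (Set ℝ), Cardinal.mk S = c ∧
    (∀ A ∈ S, MeasureTheory.volume A = 0) ∧ ⋃₀ S = Set.univ }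

/-- `cov(ℳ)`: the least cardinality of a family of meager subsets of `ℝ` covering `ℝ`. -/
noncomputable def covMeager : Cardinal :=
  sInf { c : Cardinal | ∃ S : Set (Set ℝ), Cardinal.mk S = c ∧
    (∀ A ∈ S, IsMeagre A) ∧ ⋃₀ S = Set.univ }

open Set MeasureTheory Topology
open scoped Pointwise

/-- **Steinhaus theorem** for sums: if `S ⊆ ℝ` is measurable and not null, then `S + S` has
nonempty interior. -/
theorem interior_add_self_nonempty_of_volume_ne_zero {S : Set ℝ} (hS : MeasurableSet S)
    (hpos : volume S ≠ 0) : (interior (S + S)).Nonempty := by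
  have hmeas (t : ℝ) : MeasurableSet (S ∩ (fun x => t - x) ⁻¹' S) :=
    hS.inter (hS.preimage (by fun_prop))
  obtain ⟨t, ht⟩ : ∃ t : ℝ, volume (S ∩ (fun x => t - x) ⁻¹' S) ≠ 0 := by
    by_contra! h
    have hT : MeasurableSet {p : ℝ × ℝ | p.1 ∈ S ∧ p.2 - p.1 ∈ S} :=
      (hS.preimage measurable_fst).inter (hS.preimage (by fun_prop))
    have hzero : (volume.prod volume) {p : ℝ × ℝ | p.1 ∈ S ∧ p.2 - p.1 ∈ S} = 0 := by
      rw [Measure.prod_apply_symm hT]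
      exact (lintegral_congr h).trans lintegral_zero
    have hae := Measure.measure_ae_null_of_prod_null hzero
    refine hpos (measure_mono_null (fun x hx => ?_) hae)
    intro (hx0 : volume {y | x ∈ S ∧ y - x ∈ S} = 0)
    refine hpos ?_
    simp only [hx, true_and] at hx0
    rwa [← (measurePreserving_sub_right volume x).measure_preimage hS.nullMeasurableSet]
  have hnhds := Measure.sub_mem_nhds_zero_of_addHaar_pos volume _ (hmeas t)
    (pos_iff_ne_zero.mpr ht)
  refine ⟨t, mem_interior_iff_mem_nhds.mpr ?_⟩
  have hsub : Filter.Tendsto (fun y : ℝ => y - t) (𝓝 t) (𝓝 0) := by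
    simpa using (continuous_sub_right t).tendsto t
  filter_upwards [hsub hnhds] with y hy
  obtain ⟨a, ha, b, hb, hab⟩ := hy
  exact ⟨a, ha.1, t - b, hb.2, by simp only at hab; linarith⟩

/-- **Piccard–Pettis theorem** for sums: if `S ⊆ ℝ` is Borel and nonmeager, then `S + S` has
nonempty interior. -/
theorem interior_add_self_nonempty_of_not_isMeagre {S : Set ℝ} (hS : MeasurableSet S)
    (hmeagre : ¬ IsMeagre S) : (interior (S + S)).Nonempty := by
  obtain ⟨U, hU, hSU⟩ := hS.residualEq_isOpen
  have hUne : U.Nonempty := by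
    rw [nonempty_iff_ne_empty]
    rintro rfl
    refine hmeagre ?_
    filter_upwards [hSU] with x hx hxS
    exact (hx.mp hxS : x ∈ (∅ : Set ℝ))
  refine (hUne.add hUne).mono (interior_maximal ?_ hU.add_right)
  rintro _ ⟨u, hu, v, hv, rfl⟩
  let e := Homeomorph.subLeft (u + v)
  have hopen : IsOpen (U ∩ e ⁻¹' U) := hU.inter (hU.preimage e.continuous)
  have hne : (U ∩ e ⁻¹' U).Nonempty := ⟨u, hu, by simpa [e] using hv⟩
  have hreflect : ∀ᶠ x in residual ℝ, e x ∈ S ↔ e x ∈ U :=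
    (tendsto_residual_of_isOpenMap e.continuous e.isOpenMap).eventually
      (hSU.mono fun x hx => hx.to_iff)
  by_contra hmem
  refine not_isMeagre_of_isOpen hopen hne ?_
  filter_upwards [hSU, hreflect] with x hx hex hxU
  refine hmem ⟨x, hx.mpr hxU.1, e x, hex.mpr hxU.2, ?_⟩
  simp [e]

theorem nsmul_mem_of_add_mem {S : Set ℝ} (hadd : ∀ x ∈ S, ∀ y ∈ S, x + y ∈ S) {x : ℝ}
    (hx : x ∈ S) {n : ℕ} (hn : 0 < n) : n * x ∈ S := by
  induction n, hn using Nat.le_induction with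
  | base => simpa using hx
  | succ n _ ih =>
    rw [Nat.cast_succ, add_one_mul]
    exact hadd _ ih _ hx

/-- If one additively closed piece of a partition of `ℝ` contains an open interval of positive
reals, then it contains every positive real. -/
theorem Ioi_zero_subset_of_Ioo_subset {ι : Type*} {A : ι → Set ℝ}
    (hdisj : Pairwise (Function.onFun Disjoint A)) (hcover : (⋃ i, A i) = univ)
    (hadd : ∀ i, ∀ x ∈ A i, ∀ y ∈ A i, x + y ∈ A i) {i : ι} {a b : ℝ} (ha : 0 ≤ a)
    (hab : a < b) (hsub : Ioo a b ⊆ A i) : Ioi 0 ⊆ A i := by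
  intro y (hy : 0 < y)
  obtain ⟨j, hj⟩ := mem_iUnion.mp (hcover ▸ mem_univ y)
  obtain rfl | hij := eq_or_ne i j
  · exact hj
  obtain ⟨q, haq, hqb⟩ := exists_rat_btwn (div_lt_div_of_pos_right hab hy)
  have hq : 0 < q := by exact_mod_cast (div_nonneg ha hy.le).trans_lt haq
  have hz := hsub ⟨(div_lt_iff₀ hy).mp haq, (lt_div_iff₀ hy).mp hqb⟩
  have hnum : ((q.num.toNat : ℕ) : ℝ) = q.den * q := by
    have h : ((q.num.toNat : ℤ) : ℚ) = q.den * q := by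
      rw [Int.toNat_of_nonneg (Rat.num_pos.mpr hq).le, mul_comm, Rat.mul_den_eq_num]
    exact_mod_cast congrArg (Rat.cast : ℚ → ℝ) h
  have hi := nsmul_mem_of_add_mem (hadd i) hz q.den_pos
  have hj' := nsmul_mem_of_add_mem (hadd j) hj
    (n := q.num.toNat) (by have := Rat.num_pos.mpr hq; omega)
  rw [hnum, mul_assoc] at hj'
  exact (disjoint_left.mp (hdisj hij) hi hj').elim

section Ideal

/-! In this section `N` is a notion of smallness for sets of reals for which large Borel sets
satisfy a Steinhaus-type theorem. -/

variable {ι : Type} {A : ι → Set ℝ} {N : Set ℝ → Prop}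

theorem exists_Ioi_zero_subset_or_small_cover (hzero : N {0})
    (hunion : ∀ s t, N s → N t → N (s ∪ t)) (hneg : ∀ s, N s → N (-s))
    (hint : ∀ s, MeasurableSet s → ¬ N s → (interior (s + s)).Nonempty)
    (hmeas : ∀ i, MeasurableSet (A i)) (hdisj : Pairwise (Function.onFun Disjoint A))
    (hcover : (⋃ i, A i) = univ) (hadd : ∀ i, ∀ x ∈ A i, ∀ y ∈ A i, x + y ∈ A i) :
    (∃ i, Ioi 0 ⊆ A i) ∨
      ∃ S : Set (Set ℝ), Cardinal.mk S ≤ Cardinal.mk ι ∧ (∀ s ∈ S, N s) ∧ ⋃₀ S = univ := by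
  have hmem (x : ℝ) : ∃ i, x ∈ A i := mem_iUnion.mp (hcover ▸ mem_univ x)
  by_cases hsmall : ∀ i, N (A i ∩ Ioi 0)
  · right
    refine ⟨range fun i => (A i ∩ Ioi 0) ∪ -(A i ∩ Ioi 0) ∪ {0}, Cardinal.mk_range_le, ?_, ?_⟩
    · rintro _ ⟨i, rfl⟩
      exact hunion _ _ (hunion _ _ (hsmall i) (hneg _ (hsmall i))) hzero
    · rw [sUnion_range, eq_univ_iff_forall]
      intro x
      rw [mem_iUnion]
      rcases lt_trichotomy x 0 with hx | rfl | hx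
      · obtain ⟨i, hi⟩ := hmem (-x)
        exact ⟨i, Or.inl (Or.inr ⟨hi, neg_pos.mpr hx⟩)⟩
      · obtain ⟨i, -⟩ := hmem 0
        exact ⟨i, Or.inr rfl⟩
      · obtain ⟨i, hi⟩ := hmem x
        exact ⟨i, Or.inl (Or.inl ⟨hi, hx⟩)⟩
  · left
    push Not at hsmall
    obtain ⟨i, hi⟩ := hsmall
    obtain ⟨x, hx⟩ := hint _ ((hmeas i).inter measurableSet_Ioi) hi
    have hsub : A i ∩ Ioi 0 + A i ∩ Ioi 0 ⊆ A i ∩ Ioi 0 := by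
      rintro _ ⟨a, ha, b, hb, rfl⟩
      exact ⟨hadd i a ha.1 b hb.1, add_pos (mem_Ioi.mp ha.2) (mem_Ioi.mp hb.2)⟩
    have hxpos : 0 < x := (hsub (interior_subset hx)).2
    obtain ⟨b, hxb, hb⟩ := exists_Ico_subset_of_mem_nhds (mem_interior_iff_mem_nhds.mp hx)
      (exists_gt x)
    exact ⟨i, Ioi_zero_subset_of_Ioo_subset hdisj hcover hadd hxpos.le hxb
      fun y hy => (hsub (hb (Ioo_subset_Ico_self hy))).1⟩

theorem mk_le_three_or_small_cover (hzero : N {0})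
    (hunion : ∀ s t, N s → N t → N (s ∪ t)) (hneg : ∀ s, N s → N (-s))
    (hint : ∀ s, MeasurableSet s → ¬ N s → (interior (s + s)).Nonempty)
    (hmeas : ∀ i, MeasurableSet (A i)) (hne : ∀ i, (A i).Nonempty)
    (hdisj : Pairwise (Function.onFun Disjoint A))
    (hcover : (⋃ i, A i) = univ) (hadd : ∀ i, ∀ x ∈ A i, ∀ y ∈ A i, x + y ∈ A i) :
    Cardinal.mk ι ≤ 3 ∨
      ∃ S : Set (Set ℝ), Cardinal.mk S ≤ Cardinal.mk ι ∧ (∀ s ∈ S, N s) ∧ ⋃₀ S = univ := by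
  obtain ⟨i, hi⟩ | h := exists_Ioi_zero_subset_or_small_cover hzero hunion hneg hint hmeas hdisj
    hcover hadd
  swap
  · exact Or.inr h
  obtain ⟨j, hj⟩ | h := exists_Ioi_zero_subset_or_small_cover (A := fun i => -A i) hzero hunion
    hneg hint (fun i => (hmeas i).neg)
    (fun i j hij => disjoint_left.mpr fun x hx hx' => disjoint_left.mp (hdisj hij) hx hx')
    (by rw [← iUnion_neg, hcover, neg_univ])
    (fun i x hx y hy => by
      rw [mem_neg, neg_add]
      exact hadd i _ hx _ hy)
  swap
  · exact Or.inr h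
  obtain ⟨k, hk⟩ := mem_iUnion.mp (hcover ▸ mem_univ (0 : ℝ))
  left
  have heq {l m : ι} {x : ℝ} (hl : x ∈ A l) (hm : x ∈ A m) : m = l := by
    by_contra hlm
    exact disjoint_left.mp (hdisj hlm) hm hl
  have hsurj : Function.Surjective ![i, j, k] := by
    intro l
    obtain ⟨x, hx⟩ := hne l
    rcases lt_trichotomy x 0 with hx0 | rfl | hx0
    · have hxj : x ∈ A j := by simpa using hj (neg_pos.mpr hx0)
      exact ⟨1, heq hx hxj⟩
    · exact ⟨2, heq hx hk⟩
    · exact ⟨0, heq hx (hi hx0)⟩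
  simpa using Cardinal.mk_le_of_surjective hsurj

end Ideal

theorem isMeagre_singleton_real (x : ℝ) : IsMeagre ({x} : Set ℝ) :=
  IsNowhereDense.isMeagre (by simp [IsNowhereDense])

/-- If `ℝ` is partitioned into nonempty Borel sets closed under addition, then the number of
pieces is `1`, `2`, `3`, or at least `max(cov(𝒩), cov(ℳ))`. -/
theorem stmt_6 {ι : Type} (A : ι → Set ℝ)
    (hmeas : ∀ i, MeasurableSet (A i))
    (hne : ∀ i, (A i).Nonempty)
    (hdisj : Pairwise (Function.onFun Disjoint A))
    (hcover : (⋃ i, A i) = Set.univ)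
    (hadd : ∀ i, ∀ x ∈ A i, ∀ y ∈ A i, x + y ∈ A i) :
    Cardinal.mk ι = 1 ∨ Cardinal.mk ι = 2 ∨ Cardinal.mk ι = 3 ∨
      (covNull ≤ Cardinal.mk ι ∧ covMeager ≤ Cardinal.mk ι) := by
  have hnull := mk_le_three_or_small_cover (N := fun s => volume s = 0) (by simp)
    (fun _ _ => measure_union_null) (fun s hs => by rwa [Measure.measure_neg])
    (fun _ => interior_add_self_nonempty_of_volume_ne_zero) hmeas hne hdisj hcover hadd
  have hmeagre := mk_le_three_or_small_cover (N := IsMeagre) (isMeagre_singleton_real 0)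
    (fun _ _ => IsMeagre.union)
    (fun _ hs => hs.preimage_of_isOpenMap continuous_neg (Homeomorph.neg ℝ).isOpenMap)
    (fun _ => interior_add_self_nonempty_of_not_isMeagre) hmeas hne hdisj hcover hadd
  by_cases hle : Cardinal.mk ι ≤ 3
  · obtain ⟨i, -⟩ := mem_iUnion.mp (hcover ▸ mem_univ (0 : ℝ))
    have hpos : Cardinal.mk ι ≠ 0 := Cardinal.mk_ne_zero_iff.mpr ⟨i⟩
    obtain ⟨n, hn⟩ := Cardinal.lt_aleph0.mp (hle.trans_lt (Cardinal.natCast_lt_aleph0 (n := 3)))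
    rw [hn] at hle hpos ⊢
    norm_cast at hle hpos ⊢
    omega
  · obtain ⟨S, hS, hSnull, hScover⟩ := hnull.resolve_left hle
    obtain ⟨T, hT, hTmeagre, hTcover⟩ := hmeagre.resolve_left hle
    exact Or.inr (Or.inr (Or.inr ⟨le_trans (csInf_le' ⟨S, rfl, hSnull, hScover⟩) hS,
      le_trans (csInf_le' ⟨T, rfl, hTmeagre, hTcover⟩) hT⟩))
end
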